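/- Let Y solve dY(t) = D(t)dt + √(ν(Y(t))₊)dB(t) on [0,T] with Y(0)=y ∈ (0,T], where ν > 0 and D : [0,T] → ℝ is a piecewise constant non-random function bounded above by d > 0. Then there exist constants C, c > 0 depending only on d and ν (not on y or T) such that P(sup_{t≤T} Y(t) ≥ xT) ≤ C e^{−cx} for all x ≥ 0. -/

import Mathlib

open MeasureTheory ProbabilityTheory Filter
open scoped ENNReal NNReal

noncomputable section

namespace Paper

/-- A real-valued process indexed by `t ∈ [t0, ∞)` is a martingale w.r.t. the filtration `F`. -/
def MartingaleFrom {Ω : Type*} [MeasureSpace Ω] (t0 : ℝ) (F : ℝ → MeasurableSpace Ω)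
    (X : ℝ → Ω → ℝ) : Prop :=
  (∀ t : ℝ, t0 ≤ t → Integrable (X t) (volume : Measure Ω)) ∧
  ∀ s t : ℝ, t0 ≤ s → s ≤ t →
    (volume : Measure Ω)[X t | F s] =ᵐ[(volume : Measure Ω)] X s

/-- `Y` is a solution, started at time `t0` from value `y0`, of the SDE
`dY = b(t, Y) dt + √(a(t, Y)) dB`, formulated via the martingale problem: for every `C²`
compactly supported `f`, `f(Y_t) − ∫_{t0}^t (b f' + (a/2) f'')(s, Y_s) ds` is a martingale
in some filtration to which `Y` is adapted. -/
def IsDiffusionFrom {Ω : Type*} [MeasureSpace Ω] (t0 : ℝ) (b a : ℝ → ℝ → ℝ) (y0 : ℝ)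
    (Y : Ω → ℝ → ℝ) : Prop :=
  (∀ t : ℝ, Measurable fun ω => Y ω t) ∧
  (∀ᵐ ω ∂(volume : Measure Ω), ContinuousOn (Y ω) (Set.Ici t0) ∧ Y ω t0 = y0) ∧
  ∃ F : ℝ → MeasurableSpace Ω, Monotone F ∧ (∀ t, F t ≤ (inferInstance : MeasurableSpace Ω)) ∧
    (∀ t : ℝ, t0 ≤ t → @Measurable Ω ℝ (F t) _ fun ω => Y ω t) ∧
    ∀ f : ℝ → ℝ, ContDiff ℝ 2 f → HasCompactSupport f →
      MartingaleFrom t0 F fun t ω =>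
        f (Y ω t) - ∫ s in Set.Ioc t0 t,
          (b s (Y ω s) * deriv f (Y ω s) + a s (Y ω s) / 2 * iteratedDeriv 2 f (Y ω s))

/-- `D` is a piecewise constant (non-random) function on `[u, v]`. -/
def PiecewiseConstantOn (D : ℝ → ℝ) (u v : ℝ) : Prop :=
  ∃ (n : ℕ) (t : Fin (n + 1) → ℝ) (c : Fin n → ℝ),
    Monotone t ∧ t 0 = u ∧ t (Fin.last n) = v ∧
    ∀ i : Fin n, ∀ x ∈ Set.Ico (t i.castSucc) (t i.succ), D x = c i

/-!
Let `p = 1 / (ν T)`, `H = x T`, and let `u z = e^{-p H} (e^{p z} + e^{-q z})` for a small `q > 0`.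
Where `u z < 1` one has `z < H`, so the diffusion coefficient is at most `ν H` and the generator
satisfies `L u ≤ κ u` with `κ = p d + ν H p² / 2`, that is `κ T = d / ν + x / (2 ν)`. Convexity
transfers this to the compactly supported test function `f = (1 - u)₊³`, as `L f ≥ -κ (1 - f)`.
By Dynkin's formula and Grönwall's inequality, `e^{κ (T - t)} (1 - f (Y t))` is then a nonnegative
supermartingale on `[0, T]`. It is at least `1` as soon as `Y t ≥ H`, so the maximal inequality
bounds the probability by `e^{κ T} (1 - f y) ≤ 3 e^{κ T} u y`, where the factor `e^{-x / ν}` in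
`u y` beats the factor `e^{x / (2 ν)}` in `e^{κ T}`.
-/

open scoped Topology

section Cutoff

theorem hasDerivAt_max_zero_pow (n : ℕ) (x : ℝ) :
    HasDerivAt (fun y : ℝ => max y 0 ^ (n + 2)) ((n + 2) * max x 0 ^ (n + 1)) x := by
  have hpow : HasDerivAt (fun y : ℝ => y ^ (n + 2)) ((n + 2) * x ^ (n + 1)) x := by
    simpa using hasDerivAt_pow (n + 2) x
  rcases lt_trichotomy x 0 with hx | rfl | hx
  · rw [max_eq_right hx.le, zero_pow n.succ_ne_zero, mul_zero]
    refine (hasDerivAt_const x (0 : ℝ)).congr_of_eventuallyEq ?_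
    filter_upwards [eventually_lt_nhds hx] with y hy
    simp [max_eq_right hy.le]
  · have hleft : HasDerivWithinAt (fun y : ℝ => max y 0 ^ (n + 2)) 0 (Set.Iic 0) 0 :=
      (hasDerivWithinAt_const _ _ (0 : ℝ)).congr
        (fun y hy => by simp [max_eq_right (Set.mem_Iic.1 hy)]) (by simp)
    have hright : HasDerivWithinAt (fun y : ℝ => max y 0 ^ (n + 2)) 0 (Set.Ici 0) 0 := by
      rw [zero_pow n.succ_ne_zero, mul_zero] at hpow
      exact hpow.hasDerivWithinAt.congr
        (fun y hy => by simp [max_eq_left (Set.mem_Ici.1 hy)]) (by simp)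
    simpa [Set.Iic_union_Ici] using hleft.union hright
  · rw [max_eq_left hx.le]
    refine hpow.congr_of_eventuallyEq ?_
    filter_upwards [eventually_gt_nhds hx] with y hy
    rw [max_eq_left (le_of_lt hy)]

theorem contDiff_max_zero_pow (n : ℕ) : ContDiff ℝ n fun x : ℝ => max x 0 ^ (n + 1) := by
  induction n with
  | zero => exact contDiff_zero.2 (by fun_prop)
  | succ n ih =>
    have hderiv := fun x => hasDerivAt_max_zero_pow n x
    rw [Nat.cast_succ, contDiff_succ_iff_deriv]
    refine ⟨fun x => (hderiv x).differentiableAt, by simp, ?_⟩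
    rw [funext fun x => (hderiv x).deriv]
    exact contDiff_const.mul ih

/-- The `C²` cutoff at level `1` of a Lyapunov function `u`, which turns a proper `u` into a
compactly supported test function. It is a convex decreasing function of `u` vanishing exactly
where `1 ≤ u`; the third power is the smallest one giving a `C²` function. -/
def cubicCutoff (u : ℝ → ℝ) (x : ℝ) : ℝ := max (1 - u x) 0 ^ 3

variable {u : ℝ → ℝ}

theorem cubicCutoff_nonneg (u : ℝ → ℝ) (x : ℝ) : 0 ≤ cubicCutoff u x := by
  unfold cubicCutoff; positivity

theorem cubicCutoff_le_one {x : ℝ} (hu : 0 ≤ u x) : cubicCutoff u x ≤ 1 :=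
  pow_le_one₀ (le_max_right _ _) (max_le (by linarith) zero_le_one)

theorem cubicCutoff_eq_zero {x : ℝ} (hx : 1 ≤ u x) : cubicCutoff u x = 0 := by
  rw [cubicCutoff, max_eq_right (by linarith), zero_pow three_ne_zero]

theorem one_sub_cubicCutoff_le (u : ℝ → ℝ) (x : ℝ) : 1 - cubicCutoff u x ≤ 3 * u x := by
  have hbernoulli := one_add_mul_le_pow (a := max (1 - u x) 0 - 1)
    (by linarith [le_max_right (1 - u x) 0]) 3
  rw [add_sub_cancel] at hbernoulli
  push_cast at hbernoulli
  unfold cubicCutoff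
  linarith [le_max_left (1 - u x) 0]

theorem contDiff_cubicCutoff (hu : ContDiff ℝ 2 u) : ContDiff ℝ 2 (cubicCutoff u) :=
  (contDiff_max_zero_pow 2).comp (contDiff_const.sub hu)

theorem deriv_cubicCutoff (hu : Differentiable ℝ u) :
    deriv (cubicCutoff u) = fun x => -(3 * max (1 - u x) 0 ^ 2 * deriv u x) := by
  funext x
  have h := (hasDerivAt_max_zero_pow 1 (1 - u x)).comp x ((hu x).hasDerivAt.const_sub 1)
  refine h.deriv.trans ?_
  norm_num

theorem iteratedDeriv_two_cubicCutoff (hu : ContDiff ℝ 2 u) (x : ℝ) :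
    iteratedDeriv 2 (cubicCutoff u) x =
      6 * max (1 - u x) 0 * deriv u x ^ 2 - 3 * max (1 - u x) 0 ^ 2 * iteratedDeriv 2 u x := by
  have hu₁ : Differentiable ℝ u := hu.differentiable two_ne_zero
  have hu₂ : HasDerivAt (deriv u) (iteratedDeriv 2 u x) x := by
    rw [iteratedDeriv_succ, iteratedDeriv_one]
    exact (hu.differentiable_deriv_two x).hasDerivAt
  have hsq := ((hasDerivAt_max_zero_pow 0 (1 - u x)).comp x
    ((hu₁ x).hasDerivAt.const_sub 1)).const_mul 3
  rw [iteratedDeriv_succ, iteratedDeriv_one, deriv_cubicCutoff hu₁]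
  refine (hsq.mul hu₂).neg.deriv.trans ?_
  simp only [Function.comp_apply]
  norm_num
  ring

end Cutoff

section Generator

/-- The time-dependent generator `f ↦ b f' + (a / 2) f''` of the diffusion with drift `b` and
squared diffusion coefficient `a`. -/
def generator (b a : ℝ → ℝ → ℝ) (f : ℝ → ℝ) (t x : ℝ) : ℝ :=
  b t x * deriv f x + a t x / 2 * iteratedDeriv 2 f x

variable {b a : ℝ → ℝ → ℝ} {u : ℝ → ℝ} {κ t x : ℝ}

theorem generator_cubicCutoff_ge (hκ : 0 ≤ κ) (hu : ContDiff ℝ 2 u) (ha : 0 ≤ a t x)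
    (hLu : u x < 1 → generator b a u t x ≤ κ * u x) :
    -(κ * (1 - cubicCutoff u x)) ≤ generator b a (cubicCutoff u) t x := by
  have hgen : generator b a (cubicCutoff u) t x =
      3 * a t x * max (1 - u x) 0 * deriv u x ^ 2
        - 3 * max (1 - u x) 0 ^ 2 * generator b a u t x := by
    rw [generator, generator, deriv_cubicCutoff (hu.differentiable two_ne_zero),
      iteratedDeriv_two_cubicCutoff hu]
    ring
  have hconvex : 0 ≤ 3 * a t x * max (1 - u x) 0 * deriv u x ^ 2 := by positivity
  rcases lt_or_ge (u x) 1 with hux | hux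
  · have hdrift : 3 * (1 - u x) ^ 2 * generator b a u t x ≤ 3 * (1 - u x) ^ 2 * (κ * u x) := by
      gcongr
      exact hLu hux
    have hpoly : 3 * (1 - u x) ^ 2 * u x ≤ 1 - (1 - u x) ^ 3 := by
      nlinarith [mul_nonneg (sq_nonneg (u x)) (by linarith : 0 ≤ 3 - 2 * u x)]
    rw [hgen, cubicCutoff]
    rw [max_eq_left (by linarith)] at hconvex ⊢
    linarith [mul_le_mul_of_nonneg_left hpoly hκ]
  · rw [hgen, cubicCutoff_eq_zero hux, max_eq_right (by linarith)]
    linarith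

end Generator

section Gronwall

theorem le_mul_exp_of_le_add_mul_integral {φ : ℝ → ℝ} {K δ s t : ℝ}
    (hφ : ContinuousOn φ (Set.Icc s t)) (hK : 0 ≤ K) (hst : s ≤ t)
    (hle : ∀ r ∈ Set.Icc s t, φ r ≤ δ + K * ∫ q in s..r, φ q) :
    φ t ≤ δ * Real.exp (K * (t - s)) := by
  let ψ : ℝ → ℝ := Set.IccExtend hst ((Set.Icc s t).domRestrict φ)
  have hψ : Continuous ψ := hφ.domRestrict.Icc_extend'
  have hψφ : Set.EqOn ψ φ (Set.Icc s t) := fun r hr => Set.IccExtend_of_mem hst _ hr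
  have hderiv (r : ℝ) : HasDerivAt (fun r => δ + K * ∫ q in s..r, ψ q) (K * ψ r) r :=
    ((hψ.integral_hasStrictDerivAt s r).hasDerivAt.const_mul K).const_add δ
  have hψle : ∀ r ∈ Set.Icc s t, ψ r ≤ δ + K * ∫ q in s..r, ψ q := fun r hr => by
    rw [hψφ hr, intervalIntegral.integral_congr (g := φ)]
    · exact hle r hr
    · rw [Set.uIcc_of_le hr.1]
      exact hψφ.mono (Set.Icc_subset_Icc_right hr.2)
  have ht : t ∈ Set.Icc s t := Set.right_mem_Icc.2 hst
  have hgronwall := le_gronwallBound_of_liminf_deriv_right_le (δ := δ) (K := K) (ε := 0)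
    (fun r _ => (hderiv r).continuousAt.continuousWithinAt)
    (fun r _ _ => (hderiv r).hasDerivWithinAt.liminf_right_slope_le) (by simp)
    (fun r hr => by simpa using mul_le_mul_of_nonneg_left (hψle r (Set.Ico_subset_Icc_self hr)) hK)
    t ht
  rw [gronwallBound_ε0] at hgronwall
  exact hψφ ht ▸ (hψle t ht).trans hgronwall

end Gronwall

section MaximalInequality

variable {Ω ι : Type*} {m : MeasurableSpace Ω} {μ : Measure Ω} [IsFiniteMeasure μ]
  [LinearOrder ι] {𝓕 : Filtration ι m} {S : ι → Ω → ℝ} {i : ι} {c : ℝ}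

/- The bound is proved together with the mass that `S` still carries, at a later time `t`, on the
event that the level has not been reached; this is what makes the induction on `J` close. -/
theorem mul_measureReal_exists_le_add_setIntegral_le (hS : Supermartingale S 𝓕 μ) (J : Finset ι)
    (hJ : ∀ j ∈ J, i ≤ j) {t : ι} (hit : i ≤ t) (hJt : ∀ j ∈ J, j ≤ t) :
    c * μ.real {ω | ∃ j ∈ J, c ≤ S j ω} + ∫ ω in {ω | ∃ j ∈ J, c ≤ S j ω}ᶜ, S t ω ∂μ ≤
      ∫ ω, S i ω ∂μ := by
  classical
  have hmeas (K : Finset ι) {r : ι} (hK : ∀ j ∈ K, j ≤ r) :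
      MeasurableSet[𝓕 r] {ω | ∃ j ∈ K, c ≤ S j ω} := by
    have : {ω | ∃ j ∈ K, c ≤ S j ω} = ⋃ j ∈ K, {ω | c ≤ S j ω} := by ext; simp
    rw [this]
    exact Finset.measurableSet_biUnion _ fun j hj =>
      𝓕.mono (hK j hj) _ ((hS.stronglyAdapted j).measurable measurableSet_Ici)
  induction J using Finset.induction_on_max generalizing t with
  | empty => simpa using hS.setIntegral_le hit (s := Set.univ) MeasurableSet.univ
  | insert a J ha ih =>
    simp only [Finset.forall_mem_insert] at hJ hJt
    set A := {ω | ∃ j ∈ J, c ≤ S j ω}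
    set B := {ω | c ≤ S a ω}
    have hunion : {ω | ∃ j ∈ insert a J, c ≤ S j ω} = A ∪ (Aᶜ ∩ B) := by
      ext ω
      by_cases hω : ω ∈ A <;> simp_all [A, B, or_comm]
    have hA : MeasurableSet[𝓕 a] A := hmeas J fun j hj => (ha j hj).le
    have hB : MeasurableSet[𝓕 a] B := (hS.stronglyAdapted a).measurable measurableSet_Ici
    have hA' := 𝓕.le a _ hA
    have hB' := 𝓕.le a _ hB
    have hreach : c * μ.real (Aᶜ ∩ B) ≤ ∫ ω in Aᶜ ∩ B, S a ω ∂μ :=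
      setIntegral_ge_of_const_le_real (hA'.compl.inter hB') (measure_ne_top _ _)
        (fun ω hω => hω.2) (hS.integrable a).integrableOn
    have hsuper : ∫ ω in Aᶜ \ B, S t ω ∂μ ≤ ∫ ω in Aᶜ \ B, S a ω ∂μ :=
      hS.setIntegral_le hJt.1 (hA.compl.diff hB)
    have hsplit : (∫ ω in Aᶜ ∩ B, S a ω ∂μ) + ∫ ω in Aᶜ \ B, S a ω ∂μ = ∫ ω in Aᶜ, S a ω ∂μ :=
      integral_inter_add_sdiff hB' (hS.integrable a).integrableOn
    have hih := ih hJ.2 hJ.1 fun j hj => (ha j hj).le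
    rw [hunion, measureReal_union (by exact Set.disjoint_left.2 fun ω h h' => h'.1 h)
      (hA'.compl.inter hB'), show (A ∪ (Aᶜ ∩ B))ᶜ = Aᶜ \ B by ext; simp; tauto]
    linarith

theorem mul_measure_exists_mem_finset_le (hS : Supermartingale S 𝓕 μ) (hS₀ : ∀ j ω, 0 ≤ S j ω)
    (hi : IsBot i) (J : Finset ι) :
    ENNReal.ofReal c * μ {ω | ∃ j ∈ J, c ≤ S j ω} ≤ ENNReal.ofReal (∫ ω, S i ω ∂μ) := by
  classical
  have : Nonempty ι := ⟨i⟩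
  obtain ⟨t, ht⟩ := (insert i J).exists_le
  rw [Finset.forall_mem_insert] at ht
  have hmass := mul_measureReal_exists_le_add_setIntegral_le (c := c) hS J (fun j _ => hi j)
    ht.1 ht.2
  rw [← ofReal_measureReal, ← ENNReal.ofReal_mul' measureReal_nonneg]
  exact ENNReal.ofReal_le_ofReal
    ((le_add_of_nonneg_right (integral_nonneg (hS₀ t))).trans hmass)

theorem mul_measure_exists_mem_countable_le (hS : Supermartingale S 𝓕 μ)
    (hS₀ : ∀ j ω, 0 ≤ S j ω) (hi : IsBot i) {Q : Set ι} (hQ : Q.Countable) :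
    ENNReal.ofReal c * μ {ω | ∃ j ∈ Q, c ≤ S j ω} ≤ ENNReal.ofReal (∫ ω, S i ω ∂μ) := by
  have := hQ.to_subtype
  let E (J : Finset Q) : Set Ω := {ω | ∃ j ∈ J, c ≤ S j ω}
  have hE : {ω | ∃ j ∈ Q, c ≤ S j ω} = ⋃ J, E J := by
    ext ω
    simp only [E, Set.mem_iUnion, Set.mem_ofPred_eq]
    exact ⟨fun ⟨j, hj, hω⟩ => ⟨{⟨j, hj⟩}, ⟨j, hj⟩, Finset.mem_singleton_self _, hω⟩,
      fun ⟨_, j, _, hω⟩ => ⟨j, j.2, hω⟩⟩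
  have hmono : Monotone E := fun J K hJK ω ⟨j, hj, hω⟩ => ⟨j, hJK hj, hω⟩
  rw [hE, hmono.measure_iUnion, ENNReal.mul_iSup]
  refine iSup_le fun J => ?_
  simpa [E] using mul_measure_exists_mem_finset_le (c := c) hS hS₀ hi (J.map (.subtype _))

theorem mul_measure_exists_le_of_continuous [TopologicalSpace ι] [TopologicalSpace.SeparableSpace ι]
    (hS : Supermartingale S 𝓕 μ) (hS₀ : ∀ j ω, 0 ≤ S j ω)
    (hScont : ∀ᵐ ω ∂μ, Continuous fun j => S j ω) (hi : IsBot i) :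
    ENNReal.ofReal c * μ {ω | ∃ j, c ≤ S j ω} ≤ ENNReal.ofReal (∫ ω, S i ω ∂μ) := by
  obtain ⟨Q, hQ, hdense⟩ := TopologicalSpace.exists_countable_dense ι
  have hbelow (c' : ℝ) (hc' : c' < c) :
      ENNReal.ofReal c' * μ {ω | ∃ j, c ≤ S j ω} ≤ ENNReal.ofReal (∫ ω, S i ω ∂μ) := by
    refine le_trans ?_ (mul_measure_exists_mem_countable_le (c := c') hS hS₀ hi hQ)
    gcongr 1
    refine measure_mono_ae ?_
    filter_upwards [hScont] with ω hω ⟨j, hj⟩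
    obtain ⟨q, hq, hqQ⟩ := hdense.exists_mem_open (isOpen_Ioi.preimage hω) ⟨j, hc'.trans_le hj⟩
    exact ⟨q, hq, (hqQ : c' < S q ω).le⟩
  have hlim : Tendsto (fun c' => ENNReal.ofReal c' * μ {ω | ∃ j, c ≤ S j ω}) (𝓝[<] c)
      (𝓝 (ENNReal.ofReal c * μ {ω | ∃ j, c ≤ S j ω})) :=
    ENNReal.Tendsto.mul_const
      ((ENNReal.continuous_ofReal.tendsto c).mono_left nhdsWithin_le_nhds)
      (.inr (measure_ne_top _ _))
  exact le_of_tendsto hlim (eventually_nhdsWithin_of_forall hbelow)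

end MaximalInequality

section ContinuousProcess

variable {Ω : Type*} {m : MeasurableSpace Ω} {μ : Measure Ω} {X : ℝ → Ω → ℝ} {C t₀ s t : ℝ}

theorem aestronglyMeasurable_uncurry_of_continuousOn [SFinite μ] (hXm : ∀ t, Measurable (X t))
    (hXc : ∀ᵐ ω ∂μ, ContinuousOn (fun t => X t ω) (Set.Ici t₀)) :
    AEStronglyMeasurable (Function.uncurry X) ((volume.restrict (Set.Ici t₀)).prod μ) := by
  obtain ⟨G, hG, hGm, hGc⟩ := hXc.exists_measurable_mem
  let Z (t : ℝ) : Ω → ℝ := G.indicator (X (max t t₀))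
  have hZc (ω : Ω) : Continuous fun t => Z t ω := by
    by_cases hω : ω ∈ G
    · simp only [Z, Set.indicator_of_mem hω]
      exact (hGc ω hω).comp_continuous (by fun_prop) fun t => le_max_right t t₀
    · simp only [Z, Set.indicator_of_notMem hω, continuous_const]
  have hZ := measurable_uncurry_of_continuous_of_measurable hZc fun t => (hXm _).indicator hGm
  refine hZ.aestronglyMeasurable.congr ?_
  filter_upwards [Measure.quasiMeasurePreserving_fst.ae (ae_restrict_mem measurableSet_Ici),
    Measure.quasiMeasurePreserving_snd.ae hG] with p hp hpG
  simp only [Function.uncurry, Z]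
  rw [Set.indicator_of_mem hpG, max_eq_left hp]

variable [IsFiniteMeasure μ]

theorem continuousOn_integral_of_bounded (hXm : ∀ t, Measurable (X t))
    (hXc : ∀ᵐ ω ∂μ, ContinuousOn (fun t => X t ω) (Set.Ici t₀)) (hXC : ∀ t ω, ‖X t ω‖ ≤ C) :
    ContinuousOn (fun t => ∫ ω, X t ω ∂μ) (Set.Ici t₀) :=
  continuousOn_of_dominated (fun t _ => (hXm t).aestronglyMeasurable)
    (fun t _ => .of_forall (hXC t)) (integrable_const C) hXc

theorem integrable_uncurry_of_bounded (hXm : ∀ t, Measurable (X t))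
    (hXc : ∀ᵐ ω ∂μ, ContinuousOn (fun t => X t ω) (Set.Ici t₀)) (hXC : ∀ t ω, ‖X t ω‖ ≤ C)
    (hs : t₀ ≤ s) (hst : s ≤ t) :
    Integrable (Function.uncurry X) ((volume.restrict (Set.uIoc s t)).prod μ) := by
  rw [Set.uIoc_of_le hst]
  have hsub : Set.Ioc s t ⊆ Set.Ici t₀ := fun r hr => hs.trans hr.1.le
  refine .of_bound ((aestronglyMeasurable_uncurry_of_continuousOn hXm hXc).mono_ac ?_) C
    (.of_forall fun p => hXC p.1 p.2)
  exact (Measure.restrict_mono_set volume hsub).absolutelyContinuous.prod .rfl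

end ContinuousProcess

section Dynkin

variable {Ω : Type*} [MeasureSpace Ω] [IsFiniteMeasure (volume : Measure Ω)]
  {Y : Ω → ℝ → ℝ} {F : ℝ → MeasurableSpace Ω} {b a : ℝ → ℝ → ℝ} {f : ℝ → ℝ}
  {t₀ s t κ : ℝ} {A : Set Ω}

theorem MartingaleFrom.setIntegral_eq {X : ℝ → Ω → ℝ} (hX : MartingaleFrom t₀ F X)
    (hF : F s ≤ (inferInstance : MeasurableSpace Ω)) (hs : t₀ ≤ s) (hst : s ≤ t)
    (hA : MeasurableSet[F s] A) : ∫ ω in A, X t ω = ∫ ω in A, X s ω := by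
  rw [← setIntegral_condExp hF (hX.1 t (hs.trans hst)) hA]
  exact integral_congr_ae (ae_restrict_of_ae (hX.2 s t hs hst))

theorem MartingaleFrom.integrable_and_setIntegral_sub_eq_generator
    (hM : MartingaleFrom t₀ F fun t ω =>
      f (Y ω t) - ∫ r in Set.Ioc t₀ t, generator b a f r (Y ω r))
    (hF : F s ≤ (inferInstance : MeasurableSpace Ω))
    (hfY : ∀ r, t₀ ≤ r → Integrable fun ω => f (Y ω r))
    (hgen : ∀ᵐ ω, IntegrableOn (fun r => generator b a f r (Y ω r)) (Set.Ioc t₀ t))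
    (hs : t₀ ≤ s) (hst : s ≤ t) (hA : MeasurableSet[F s] A) :
    Integrable (fun ω => ∫ r in s..t, generator b a f r (Y ω r)) ∧
      (∫ ω in A, f (Y ω t)) - ∫ ω in A, f (Y ω s) =
        ∫ ω in A, ∫ r in s..t, generator b a f r (Y ω r) := by
  have ht := hs.trans hst
  have hI (r : ℝ) (hr : t₀ ≤ r) :
      Integrable fun ω => ∫ q in Set.Ioc t₀ r, generator b a f q (Y ω q) := by
    exact ((hfY r hr).sub (hM.1 r hr)).congr (.of_forall fun ω => sub_sub_cancel _ _)
  have hsplit : (fun ω => ∫ r in s..t, generator b a f r (Y ω r)) =ᵐ[volume] fun ω =>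
      (∫ r in Set.Ioc t₀ t, generator b a f r (Y ω r)) -
        ∫ r in Set.Ioc t₀ s, generator b a f r (Y ω r) := by
    filter_upwards [hgen] with ω hω
    rw [← intervalIntegral.integral_of_le ht, ← intervalIntegral.integral_of_le hs]
    refine (intervalIntegral.integral_interval_sub_left ?_ ?_).symm
    · exact (intervalIntegrable_iff_integrableOn_Ioc_of_le ht).2 hω
    · exact (intervalIntegrable_iff_integrableOn_Ioc_of_le hs).2
        (hω.mono_set (Set.Ioc_subset_Ioc_right hst))
  refine ⟨((hI t ht).sub (hI s hs)).congr hsplit.symm, ?_⟩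
  have hmart := hM.setIntegral_eq hF hs hst hA
  rw [integral_sub (hfY t ht).integrableOn (hI t ht).integrableOn,
    integral_sub (hfY s hs).integrableOn (hI s hs).integrableOn] at hmart
  rw [integral_congr_ae (ae_restrict_of_ae hsplit),
    integral_sub (hI t ht).integrableOn (hI s hs).integrableOn]
  linarith

end Dynkin

section Supermartingale

variable {Ω : Type*} [MeasureSpace Ω] [IsFiniteMeasure (volume : Measure Ω)]
  {Y : Ω → ℝ → ℝ} {F : ℝ → MeasurableSpace Ω} {b a : ℝ → ℝ → ℝ} {f : ℝ → ℝ}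
  {t₀ T s t κ : ℝ} {A : Set Ω}

theorem MartingaleFrom.setIntegral_one_sub_le_add (hYm : ∀ r, Measurable fun ω => Y ω r)
    (hYc : ∀ᵐ ω, ContinuousOn (Y ω) (Set.Ici t₀))
    (hM : MartingaleFrom t₀ F fun r ω =>
      f (Y ω r) - ∫ q in Set.Ioc t₀ r, generator b a f q (Y ω q))
    (hf : Continuous f) (hfI : ∀ x, f x ∈ Set.Icc 0 1)
    (hpath : ∀ᵐ ω, IntegrableOn (fun r => generator b a f r (Y ω r)) (Set.Ioc t₀ t))
    (hgen : ∀ r ∈ Set.Icc t₀ t, ∀ x, -(κ * (1 - f x)) ≤ generator b a f r x)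
    (hF : F s ≤ (inferInstance : MeasurableSpace Ω))
    (hs : t₀ ≤ s) (hst : s ≤ t) (hA : MeasurableSet[F s] A) :
    ∫ ω in A, (1 - f (Y ω t)) ≤
      (∫ ω in A, (1 - f (Y ω s))) + κ * ∫ q in s..t, ∫ ω in A, (1 - f (Y ω q)) := by
  have hfm (r : ℝ) : Measurable fun ω => f (Y ω r) := hf.measurable.comp (hYm r)
  have hf1 (x : ℝ) : ‖f x‖ ≤ 1 := by rw [Real.norm_of_nonneg (hfI x).1]; exact (hfI x).2
  have hfi (r : ℝ) : Integrable fun ω => f (Y ω r) :=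
    .of_bound (hfm r).aestronglyMeasurable 1 (.of_forall fun ω => hf1 _)
  have hgc : ∀ᵐ ω, ContinuousOn (fun r => 1 - f (Y ω r)) (Set.Ici t₀) :=
    hYc.mono fun ω hω => continuousOn_const.sub (hf.comp_continuousOn hω)
  have hprod := integrable_uncurry_of_bounded (C := 1) (fun r => (hfm r).const_sub 1)
    (ae_restrict_of_ae (s := A) hgc)
    (fun r ω => abs_le.2 ⟨by linarith [(hfI (Y ω r)).2], by linarith [(hfI (Y ω r)).1]⟩) hs hst
  obtain ⟨hdynkin_int, hdynkin⟩ := hM.integrable_and_setIntegral_sub_eq_generator hF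
    (fun q _ => hfi q) hpath hs hst hA
  have hlower : ∀ᵐ ω, -(κ * ∫ q in s..t, (1 - f (Y ω q))) ≤
      ∫ q in s..t, generator b a f q (Y ω q) := by
    filter_upwards [hgc, hpath] with ω hω hint
    rw [← intervalIntegral.integral_const_mul, ← intervalIntegral.integral_neg]
    refine intervalIntegral.integral_mono_on hst ?_ ?_ fun q hq => ?_
    · refine ContinuousOn.intervalIntegrable_of_Icc hst ?_
      exact ((hω.mono fun q hq => hs.trans hq.1).const_mul κ).neg
    · exact (intervalIntegrable_iff_integrableOn_Ioc_of_le hst).2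
        (hint.mono_set (Set.Ioc_subset_Ioc_left hs))
    · exact hgen q ⟨hs.trans hq.1, hq.2⟩ _
  have hmono : -(κ * ∫ q in s..t, ∫ ω in A, (1 - f (Y ω q))) ≤
      ∫ ω in A, ∫ q in s..t, generator b a f q (Y ω q) := by
    rw [intervalIntegral_integral_swap hprod, ← integral_const_mul, ← integral_neg]
    refine integral_mono_ae ?_ hdynkin_int.integrableOn (ae_restrict_of_ae hlower)
    have := hprod.integral_prod_right
    rw [Set.uIoc_of_le hst] at this
    simp only [intervalIntegral.integral_of_le hst]
    exact (this.const_mul κ).neg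
  have hone : Integrable (fun _ : Ω => (1 : ℝ)) (volume.restrict A) := integrable_const 1
  rw [integral_sub hone (hfi t).integrableOn, integral_sub hone (hfi s).integrableOn]
  linarith

theorem MartingaleFrom.setIntegral_one_sub_le_mul_exp (hκ : 0 ≤ κ)
    (hYm : ∀ r, Measurable fun ω => Y ω r)
    (hYc : ∀ᵐ ω, ContinuousOn (Y ω) (Set.Ici t₀))
    (hM : MartingaleFrom t₀ F fun r ω =>
      f (Y ω r) - ∫ q in Set.Ioc t₀ r, generator b a f q (Y ω q))
    (hf : Continuous f) (hfI : ∀ x, f x ∈ Set.Icc 0 1)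
    (hpath : ∀ᵐ ω, IntegrableOn (fun r => generator b a f r (Y ω r)) (Set.Ioc t₀ t))
    (hgen : ∀ r ∈ Set.Icc t₀ t, ∀ x, -(κ * (1 - f x)) ≤ generator b a f r x)
    (hF : F s ≤ (inferInstance : MeasurableSpace Ω))
    (hs : t₀ ≤ s) (hst : s ≤ t) (hA : MeasurableSet[F s] A) :
    ∫ ω in A, (1 - f (Y ω t)) ≤ (∫ ω in A, (1 - f (Y ω s))) * Real.exp (κ * (t - s)) := by
  have hcont : ContinuousOn (fun r => ∫ ω in A, (1 - f (Y ω r))) (Set.Ici t₀) :=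
    continuousOn_integral_of_bounded (C := 1)
      (fun r => (hf.measurable.comp (hYm r)).const_sub 1)
      (ae_restrict_of_ae (hYc.mono fun ω hω => continuousOn_const.sub (hf.comp_continuousOn hω)))
      (fun r ω => abs_le.2 ⟨by linarith [(hfI (Y ω r)).2], by linarith [(hfI (Y ω r)).1]⟩)
  refine le_mul_exp_of_le_add_mul_integral (φ := fun r => ∫ ω in A, (1 - f (Y ω r)))
    (hcont.mono fun r hr => hs.trans hr.1) hκ hst fun r hr => ?_
  exact hM.setIntegral_one_sub_le_add hYm hYc hf hfI
    (hpath.mono fun ω hω => hω.mono_set (Set.Ioc_subset_Ioc_right hr.2))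
    (fun q hq => hgen q ⟨hq.1, hq.2.trans hr.2⟩) hF hs hr.1 hA

theorem MartingaleFrom.exists_supermartingale_exp_mul_one_sub (hκ : 0 ≤ κ)
    (hYm : ∀ r, Measurable fun ω => Y ω r)
    (hYc : ∀ᵐ ω, ContinuousOn (Y ω) (Set.Ici t₀))
    (hM : MartingaleFrom t₀ F fun r ω =>
      f (Y ω r) - ∫ q in Set.Ioc t₀ r, generator b a f q (Y ω q))
    (hf : Continuous f) (hfI : ∀ x, f x ∈ Set.Icc 0 1)
    (hpath : ∀ᵐ ω, IntegrableOn (fun r => generator b a f r (Y ω r)) (Set.Ioc t₀ T))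
    (hgen : ∀ r ∈ Set.Icc t₀ T, ∀ x, -(κ * (1 - f x)) ≤ generator b a f r x)
    (hF : Monotone F) (hFle : ∀ r, F r ≤ (inferInstance : MeasurableSpace Ω))
    (hFY : ∀ r, t₀ ≤ r → Measurable[F r] fun ω => Y ω r) :
    ∃ 𝓕 : Filtration (Set.Icc t₀ T) (inferInstance : MeasurableSpace Ω),
      Supermartingale (fun (r : Set.Icc t₀ T) ω => Real.exp (κ * (T - r)) * (1 - f (Y ω r)))
        𝓕 volume := by
  refine ⟨⟨fun r => F r, fun _ _ hrs => hF hrs, fun r => hFle r⟩, ?_⟩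
  rw [← neg_neg fun (r : Set.Icc t₀ T) ω => Real.exp (κ * (T - r)) * (1 - f (Y ω r))]
  refine (submartingale_of_setIntegral_le (fun r => ?_) (fun r => ?_) fun s t hst A hA => ?_).neg
  · have hfY : Measurable[F r] fun ω => f (Y ω r) := hf.measurable.comp (hFY r r.2.1)
    exact ((hfY.const_sub 1).const_mul _).neg.stronglyMeasurable
  · have hfY : Measurable fun ω => f (Y ω r) := hf.measurable.comp (hYm r)
    refine (Integrable.const_mul (.of_bound (hfY.const_sub 1).aestronglyMeasurable 1
      (.of_forall fun ω => abs_le.2 ⟨?_, ?_⟩)) _).neg <;>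
    linarith [(hfI (Y ω r)).1, (hfI (Y ω r)).2]
  · have hgrowth := hM.setIntegral_one_sub_le_mul_exp hκ hYm hYc hf hfI
      (hpath.mono fun ω hω => hω.mono_set (Set.Ioc_subset_Ioc_right t.2.2))
      (fun q hq => hgen q ⟨hq.1, hq.2.trans t.2.2⟩) (hFle s) s.2.1 hst hA
    simp only [Pi.neg_apply, integral_neg, integral_const_mul, neg_le_neg_iff]
    calc Real.exp (κ * (T - t)) * ∫ ω in A, (1 - f (Y ω t))
        ≤ Real.exp (κ * (T - t)) *
            ((∫ ω in A, (1 - f (Y ω s))) * Real.exp (κ * (t - s))) := by gcongr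
      _ = Real.exp (κ * (T - s)) * ∫ ω in A, (1 - f (Y ω s)) := by
        rw [mul_left_comm, ← Real.exp_add, mul_comm]
        ring_nf

end Supermartingale

section Exit

variable {Ω : Type*} [MeasureSpace Ω] [IsProbabilityMeasure (volume : Measure Ω)]
  {Y : Ω → ℝ → ℝ} {b a : ℝ → ℝ → ℝ} {u : ℝ → ℝ} {t₀ T y₀ κ : ℝ}

theorem IsDiffusionFrom.measure_exists_one_le_le (hY : IsDiffusionFrom t₀ b a y₀ Y)
    (hT : t₀ ≤ T) (hκ : 0 ≤ κ) (hu : ContDiff ℝ 2 u) (hu₀ : ∀ x, 0 ≤ u x)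
    (hsupp : HasCompactSupport (cubicCutoff u)) (ha : ∀ t ∈ Set.Icc t₀ T, ∀ x, 0 ≤ a t x)
    (hLu : ∀ t ∈ Set.Icc t₀ T, ∀ x, u x < 1 → generator b a u t x ≤ κ * u x)
    (hpath : ∀ᵐ ω, IntegrableOn (fun t => generator b a (cubicCutoff u) t (Y ω t))
      (Set.Ioc t₀ T)) :
    volume {ω | ∃ t ∈ Set.Icc t₀ T, 1 ≤ u (Y ω t)} ≤
      ENNReal.ofReal (3 * Real.exp (κ * (T - t₀)) * u y₀) := by
  obtain ⟨hYm, hY₀, F, hF, hFle, hFY, hmart⟩ := hY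
  have hYc : ∀ᵐ ω, ContinuousOn (Y ω) (Set.Ici t₀) := hY₀.mono fun ω hω => hω.1
  have hf : ContDiff ℝ 2 (cubicCutoff u) := contDiff_cubicCutoff hu
  have hf₁ (x : ℝ) : cubicCutoff u x ≤ 1 := cubicCutoff_le_one (hu₀ x)
  obtain ⟨𝓕, hS⟩ := (hmart _ hf hsupp).exists_supermartingale_exp_mul_one_sub hκ hYm hYc
    hf.continuous (fun x => ⟨cubicCutoff_nonneg u x, hf₁ x⟩) hpath
    (fun t ht x => generator_cubicCutoff_ge hκ hu (ha t ht x) (hLu t ht x)) hF hFle hFY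
  have hScont : ∀ᵐ ω, Continuous fun r : Set.Icc t₀ T =>
      Real.exp (κ * (T - r)) * (1 - cubicCutoff u (Y ω r)) := by
    filter_upwards [hYc] with ω hω
    have hYr : Continuous fun r : Set.Icc t₀ T => Y ω r :=
      hω.comp_continuous continuous_subtype_val fun r => r.2.1
    have := hf.continuous.comp hYr
    fun_prop
  have hmax := mul_measure_exists_le_of_continuous (c := 1) hS
    (fun r ω => mul_nonneg (Real.exp_pos _).le (sub_nonneg.2 (hf₁ _))) hScont
    (i := ⟨t₀, Set.left_mem_Icc.2 hT⟩) fun r => r.2.1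
  rw [ENNReal.ofReal_one, one_mul] at hmax
  refine (measure_mono ?_).trans (hmax.trans (ENNReal.ofReal_le_ofReal ?_))
  · rintro ω ⟨t, ht, hut⟩
    refine ⟨⟨t, ht⟩, ?_⟩
    rw [cubicCutoff_eq_zero hut, sub_zero, mul_one]
    exact Real.one_le_exp (mul_nonneg hκ (sub_nonneg.2 ht.2))
  · have hstart : (fun ω => Real.exp (κ * (T - t₀)) * (1 - cubicCutoff u (Y ω t₀))) =ᵐ[volume]
        fun _ => Real.exp (κ * (T - t₀)) * (1 - cubicCutoff u y₀) := by
      filter_upwards [hY₀] with ω hω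
      rw [hω.2]
    rw [integral_congr_ae hstart, integral_const, probReal_univ, one_smul, mul_comm 3, mul_assoc]
    gcongr
    exact one_sub_cubicCutoff_le u y₀

end Exit

section PiecewiseConstant

theorem Ico_subset_iUnion_Ico {α : Type*} [LinearOrder α] {n : ℕ} (t : Fin (n + 1) → α) :
    Set.Ico (t 0) (t (Fin.last n)) ⊆ ⋃ i : Fin n, Set.Ico (t i.castSucc) (t i.succ) := by
  intro x hx
  by_contra hnot
  simp only [Set.mem_iUnion, Set.mem_Ico, not_exists, not_and, not_lt] at hnot
  have hle (k : Fin (n + 1)) : t k ≤ x := by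
    induction k using Fin.induction with
    | zero => exact hx.1
    | succ i ih => exact hnot i ih
  exact (hle (Fin.last n)).not_gt hx.2

variable {D : ℝ → ℝ} {s t : ℝ}

theorem PiecewiseConstantOn.finite_image_Icc (hD : PiecewiseConstantOn D s t) :
    (D '' Set.Icc s t).Finite := by
  obtain ⟨n, τ, c, -, rfl, rfl, hc⟩ := hD
  refine ((Set.finite_range c).insert (D (τ (Fin.last n)))).subset ?_
  rintro _ ⟨r, hr, rfl⟩
  rcases hr.2.eq_or_lt with rfl | hrt
  · exact .inl rfl
  · obtain ⟨i, hi⟩ := Set.mem_iUnion.1 (Ico_subset_iUnion_Ico τ ⟨hr.1, hrt⟩)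
    exact .inr ⟨i, (hc i r hi).symm⟩

theorem PiecewiseConstantOn.integrableOn_Icc (hD : PiecewiseConstantOn D s t) :
    IntegrableOn D (Set.Icc s t) := by
  obtain ⟨n, τ, c, -, rfl, rfl, hc⟩ := hD
  rw [integrableOn_Icc_iff_integrableOn_Ico]
  refine IntegrableOn.mono_set ?_ (Ico_subset_iUnion_Ico τ)
  rw [integrableOn_finite_iUnion]
  exact fun i => (integrableOn_const measure_Ico_lt_top.ne).congr_fun
    (fun r hr => (hc i r hr).symm) measurableSet_Ico

end PiecewiseConstant

section ExpLyapunov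

/-- The Lyapunov function `exp (p z) + exp (-q z)`, normalised so that it is at least `1` on
`[H, ∞)`. The first term detects that a diffusion exceeds the level `H`; the second one, for any
`q > 0`, makes the function proper, so that its cutoff is an admissible test function. -/
def expLyapunov (p q H z : ℝ) : ℝ :=
  Real.exp (-(p * H)) * (Real.exp (p * z) + Real.exp (-(q * z)))

variable {p q H z : ℝ}

theorem expLyapunov_nonneg (p q H z : ℝ) : 0 ≤ expLyapunov p q H z := by
  unfold expLyapunov; positivity

theorem one_le_expLyapunov_of_le (hp : 0 ≤ p) (hz : H ≤ z) : 1 ≤ expLyapunov p q H z := by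
  rw [expLyapunov, mul_add, ← Real.exp_add]
  have hexp : 1 ≤ Real.exp (-(p * H) + p * z) :=
    Real.one_le_exp (by linarith [mul_le_mul_of_nonneg_left hz hp])
  linarith [mul_pos (Real.exp_pos (-(p * H))) (Real.exp_pos (-(q * z)))]

theorem one_le_expLyapunov_of_mul_le (hz : q * z ≤ -(p * H)) : 1 ≤ expLyapunov p q H z := by
  rw [expLyapunov, mul_add, ← Real.exp_add _ (-(q * z))]
  have hexp : 1 ≤ Real.exp (-(p * H) + -(q * z)) := Real.one_le_exp (by linarith)
  linarith [mul_pos (Real.exp_pos (-(p * H))) (Real.exp_pos (p * z))]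

theorem hasCompactSupport_cubicCutoff_expLyapunov (hp : 0 ≤ p) (hq : 0 < q) :
    HasCompactSupport (cubicCutoff (expLyapunov p q H)) := by
  refine .intro (isCompact_Icc (a := -(p * H) / q) (b := H)) fun z hz => cubicCutoff_eq_zero ?_
  rw [Set.mem_Icc, not_and_or, not_le, not_le] at hz
  rcases hz with hz | hz
  · exact one_le_expLyapunov_of_mul_le ((lt_div_iff₀' hq).1 hz).le
  · exact one_le_expLyapunov_of_le hp hz.le

theorem contDiff_expLyapunov {n : WithTop ℕ∞} : ContDiff ℝ n (expLyapunov p q H) := by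
  unfold expLyapunov; fun_prop

theorem deriv_expLyapunov :
    deriv (expLyapunov p q H) = fun z =>
      Real.exp (-(p * H)) * (p * Real.exp (p * z) - q * Real.exp (-(q * z))) := by
  funext z
  have h₁ := ((hasDerivAt_id z).const_mul p).exp
  have h₂ := ((hasDerivAt_id z).const_mul q).neg.exp
  refine ((h₁.add h₂).const_mul (Real.exp (-(p * H)))).deriv.trans ?_
  simp only [Pi.neg_apply, id]
  ring

theorem iteratedDeriv_two_expLyapunov :
    iteratedDeriv 2 (expLyapunov p q H) z =
      Real.exp (-(p * H)) * (p ^ 2 * Real.exp (p * z) + q ^ 2 * Real.exp (-(q * z))) := by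
  have h₁ := (((hasDerivAt_id z).const_mul p).exp).const_mul p
  have h₂ := (((hasDerivAt_id z).const_mul q).neg.exp).const_mul q
  rw [iteratedDeriv_succ, iteratedDeriv_one, deriv_expLyapunov]
  refine ((h₁.sub h₂).const_mul (Real.exp (-(p * H)))).deriv.trans ?_
  simp only [Pi.neg_apply, id]
  ring

theorem generator_expLyapunov_le {b a : ℝ → ℝ → ℝ} {t d M : ℝ} (hq : 0 ≤ q) (hqp : q ≤ p)
    (hbd : b t z ≤ d) (hqb : -(q * b t z) ≤ p * d) (ha : 0 ≤ a t z) (haM : a t z ≤ M) :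
    generator b a (expLyapunov p q H) t z ≤ (p * d + M / 2 * p ^ 2) * expLyapunov p q H z := by
  have hM : 0 ≤ M := ha.trans haM
  have hgen : generator b a (expLyapunov p q H) t z = Real.exp (-(p * H)) *
      ((p * b t z + a t z / 2 * p ^ 2) * Real.exp (p * z) +
        (-(q * b t z) + a t z / 2 * q ^ 2) * Real.exp (-(q * z))) := by
    rw [generator, deriv_expLyapunov, iteratedDeriv_two_expLyapunov]
    ring
  rw [hgen, expLyapunov, mul_left_comm, mul_add (p * d + M / 2 * p ^ 2)]
  gcongr
  exact hq.trans hqp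

end ExpLyapunov

section Tail

theorem integrableOn_generator_comp {β α y f : ℝ → ℝ} {s t : ℝ}
    (hβ : IntegrableOn β (Set.Icc s t)) (hα : Continuous α) (hf : ContDiff ℝ 2 f)
    (hy : ContinuousOn y (Set.Icc s t)) :
    IntegrableOn (fun r => generator (fun r _ => β r) (fun _ x => α x) f r (y r))
      (Set.Icc s t) := by
  have hf₁ : Continuous (deriv f) := hf.continuous_deriv one_le_two
  have hdiffusion : Continuous fun x => α x / 2 * iteratedDeriv 2 f x :=
    (hα.div_const 2).mul (hf.continuous_iteratedDeriv 2 le_rfl)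
  exact (hβ.mul_continuousOn (hf₁.comp_continuousOn hy) isCompact_Icc).add
    ((hdiffusion.comp_continuousOn hy).integrableOn_Icc)

theorem exists_le_of_le_sSup_image {y : ℝ → ℝ} {s t c : ℝ} (hst : s ≤ t)
    (hy : ContinuousOn y (Set.Icc s t)) (hc : c ≤ sSup (y '' Set.Icc s t)) :
    ∃ r ∈ Set.Icc s t, c ≤ y r := by
  obtain ⟨r, hr, hmax⟩ := isCompact_Icc.exists_sSup_image_eq (Set.nonempty_Icc.2 hst) hy
  exact ⟨r, hr, hc.trans_eq hmax⟩

end Tail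

section DriftDiffusion

variable {ν d T y x : ℝ} {D : ℝ → ℝ}

theorem exists_pos_le_of_bddBelow_image {S : Set ℝ} {p δ ε : ℝ} (hp : 0 < p) (hδ : 0 < δ)
    (hε : 0 < ε) (y : ℝ) (hD : BddBelow (D '' S)) :
    ∃ q, 0 < q ∧ q ≤ p ∧ -(q * y) ≤ ε ∧ ∀ t ∈ S, -(q * D t) ≤ δ := by
  obtain ⟨m, hm⟩ := hD
  have hsmall (z η : ℝ) (hη : 0 < η) : ∀ᶠ q in 𝓝[>] (0 : ℝ), -(q * z) < η := by
    have hcont : Continuous fun q : ℝ => -(q * z) := by fun_prop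
    exact nhdsWithin_le_nhds (hcont.continuousAt.eventually_lt_const (by simpa using hη))
  have hq : ∀ᶠ q in 𝓝[>] (0 : ℝ), 0 < q := self_mem_nhdsWithin
  obtain ⟨q, hq, hqp, hqy, hqm⟩ :=
    (hq.and ((hsmall (-1) p hp).and ((hsmall y ε hε).and (hsmall m δ hδ)))).exists
  refine ⟨q, hq, by linarith, hqy.le, fun t ht => le_trans ?_ hqm.le⟩
  exact neg_le_neg (mul_le_mul_of_nonneg_left (hm ⟨t, ht, rfl⟩) hq.le)

theorem IsDiffusionFrom.measure_exists_one_le_expLyapunov_le {Ω : Type*} [MeasureSpace Ω]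
    [IsProbabilityMeasure (volume : Measure Ω)] {Y : Ω → ℝ → ℝ} {p q H : ℝ}
    (hY : IsDiffusionFrom 0 (fun t _ => D t) (fun _ z => ν * max z 0) y Y)
    (hν : 0 ≤ ν) (hd : 0 ≤ d) (hT : 0 ≤ T) (hH : 0 ≤ H) (hq : 0 < q) (hqp : q ≤ p)
    (hDint : IntegrableOn D (Set.Icc 0 T)) (hDd : ∀ t ∈ Set.Icc 0 T, D t ≤ d)
    (hqD : ∀ t ∈ Set.Icc 0 T, -(q * D t) ≤ p * d) :
    volume {ω | ∃ t ∈ Set.Icc 0 T, 1 ≤ expLyapunov p q H (Y ω t)} ≤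
      ENNReal.ofReal
        (3 * Real.exp ((p * d + ν * H / 2 * p ^ 2) * T) * expLyapunov p q H y) := by
  have hp : 0 ≤ p := hq.le.trans hqp
  have ha (z : ℝ) : 0 ≤ ν * max z 0 := by positivity
  have hpath : ∀ᵐ ω, IntegrableOn (fun t => generator (fun t _ => D t) (fun _ z => ν * max z 0)
      (cubicCutoff (expLyapunov p q H)) t (Y ω t)) (Set.Ioc 0 T) := by
    filter_upwards [hY.2.1] with ω hω
    exact (integrableOn_generator_comp hDint (by fun_prop)
      (contDiff_cubicCutoff contDiff_expLyapunov)
      (hω.1.mono Set.Icc_subset_Ici_self)).mono_set Set.Ioc_subset_Icc_self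
  have hexit := hY.measure_exists_one_le_le hT (by positivity : 0 ≤ p * d + ν * H / 2 * p ^ 2)
    contDiff_expLyapunov (expLyapunov_nonneg p q H)
    (hasCompactSupport_cubicCutoff_expLyapunov hp hq) (fun _ _ => ha)
    (fun t ht z hz => ?_) hpath
  · rwa [sub_zero] at hexit
  · have hzH : z ≤ H := (lt_of_not_ge fun h => (one_le_expLyapunov_of_le hp h).not_gt hz).le
    refine generator_expLyapunov_le hq.le hqp (hDd t ht) (hqD t ht) (ha z) ?_
    gcongr
    exact max_le hzH hH

theorem mul_exp_mul_expLyapunov_le {q : ℝ} (hν : 0 < ν) (hT : 0 < T) (hyT : y ≤ T)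
    (hqy : -(q * y) ≤ 1 / ν) :
    3 * Real.exp ((1 / (ν * T) * d + ν * (x * T) / 2 * (1 / (ν * T)) ^ 2) * T) *
        expLyapunov (1 / (ν * T)) q (x * T) y ≤
      6 * Real.exp ((1 + d) / ν) * Real.exp (-(1 / (2 * ν)) * x) := by
  have hpy : 1 / (ν * T) * y ≤ 1 / ν := by
    rw [one_div_mul_eq_div, div_le_div_iff₀ (by positivity) hν]
    nlinarith
  calc _ ≤ 3 * Real.exp ((1 / (ν * T) * d + ν * (x * T) / 2 * (1 / (ν * T)) ^ 2) * T) *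
        (Real.exp (-(1 / (ν * T) * (x * T))) * (Real.exp (1 / ν) + Real.exp (1 / ν))) := by
        unfold expLyapunov
        gcongr
    _ = 6 * Real.exp ((1 / (ν * T) * d + ν * (x * T) / 2 * (1 / (ν * T)) ^ 2) * T
        + -(1 / (ν * T) * (x * T)) + 1 / ν) := by
        rw [Real.exp_add, Real.exp_add]
        ring
    _ = 6 * Real.exp ((1 + d) / ν + -(1 / (2 * ν)) * x) := by
        congr 2
        field_simp
        ring
    _ = _ := by rw [Real.exp_add, mul_assoc]

theorem statement7_general {Ω : Type*} [MeasureSpace Ω]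
    [IsProbabilityMeasure (volume : Measure Ω)] {Y : Ω → ℝ → ℝ}
    (hY : IsDiffusionFrom 0 (fun t _ => D t) (fun _ z => ν * max z 0) y Y)
    (hν : 0 < ν) (hd : 0 < d) (hT : 0 < T) (hyT : y ≤ T) (hx : 0 ≤ x)
    (hDint : IntegrableOn D (Set.Icc 0 T)) (hDbelow : BddBelow (D '' Set.Icc 0 T))
    (hDd : ∀ t ∈ Set.Icc 0 T, D t ≤ d) :
    volume {ω | x * T ≤ sSup (Y ω '' Set.Icc 0 T)} ≤
      ENNReal.ofReal (6 * Real.exp ((1 + d) / ν) * Real.exp (-(1 / (2 * ν)) * x)) := by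
  have hp : 0 < 1 / (ν * T) := by positivity
  obtain ⟨q, hq, hqp, hqy, hqD⟩ :=
    exists_pos_le_of_bddBelow_image hp (mul_pos hp hd) (one_div_pos.2 hν) y hDbelow
  calc volume {ω | x * T ≤ sSup (Y ω '' Set.Icc 0 T)}
      ≤ volume {ω | ∃ t ∈ Set.Icc 0 T, 1 ≤ expLyapunov (1 / (ν * T)) q (x * T) (Y ω t)} := by
        refine measure_mono_ae ?_
        filter_upwards [hY.2.1] with ω hω hsup
        obtain ⟨t, ht, hxt⟩ :=
          exists_le_of_le_sSup_image hT.le (hω.1.mono Set.Icc_subset_Ici_self) hsup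
        exact ⟨t, ht, one_le_expLyapunov_of_le hp.le hxt⟩
    _ ≤ _ := hY.measure_exists_one_le_expLyapunov_le hν.le hd.le hT.le (by positivity) hq hqp
        hDint hDd hqD
    _ ≤ _ := ENNReal.ofReal_le_ofReal (mul_exp_mul_expLyapunov_le hν hT hyT hqy)

end DriftDiffusion

/-- For `Y` solving `dY = D(t)dt + √(ν(Y)₊)dB` on `[0,T]` with `Y(0) = y ∈ (0,T]`,
`D` piecewise constant and bounded above by `d > 0`, there are `C, c > 0` depending only on
`d` and `ν` such that `P(sup_{t≤T} Y(t) ≥ xT) ≤ C e^{−cx}` for all `x ≥ 0`. -/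
theorem statement7 (ν d : ℝ) (hν : 0 < ν) (hd : 0 < d) :
    ∃ C c : ℝ, 0 < C ∧ 0 < c ∧
      ∀ (T y : ℝ) (D : ℝ → ℝ), 0 < T → y ∈ Set.Ioc (0:ℝ) T →
        PiecewiseConstantOn D 0 T → (∀ t ∈ Set.Icc (0:ℝ) T, D t ≤ d) →
      ∀ (Ω : Type) [MeasureSpace Ω] [IsProbabilityMeasure (volume : Measure Ω)],
      ∀ Y : Ω → ℝ → ℝ,
        IsDiffusionFrom 0 (fun s _ => D s) (fun _ x => ν * max x 0) y Y →
        ∀ x : ℝ, 0 ≤ x →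
          volume {ω | x * T ≤ sSup (Y ω '' Set.Icc 0 T)}
            ≤ ENNReal.ofReal (C * Real.exp (-c * x)) := by
  refine ⟨6 * Real.exp ((1 + d) / ν), 1 / (2 * ν), by positivity, by positivity, ?_⟩
  intro T y D hT hy hD hDd Ω _ _ Y hY x hx
  exact statement7_general hY hν hd hT hy.2 hx hD.integrableOn_Icc hD.finite_image_Icc.bddBelow hDd

end Paper
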